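/- For N ≥ 2 and 1 < q ≤ N/(N-1), the best constant E_q := sup over nonzero u in BV(ℝ^N) of ‖u‖_q^q / (‖u‖_1^{q-(q-1)N} ‖u‖_{TV}^{(q-1)N}) equals (1/(N^{N-1} ω_{N-1}))^{q-1}, where ω_{N-1} is the surface area of the unit sphere in ℝ^N. -/

import Mathlib

open MeasureTheory Real Filter Topology

noncomputable section

abbrev Euc (N : ℕ) := EuclideanSpace ℝ (Fin N)

/-- The set of values `∫ u div ψ` over admissible test vector fields. -/
def TVSet (N : ℕ) (u : Euc N → ℝ) : Set ℝ :=
  { r | ∃ ψ : Euc N → Euc N, ContDiff ℝ 1 ψ ∧ HasCompactSupport ψ ∧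
      (∀ x, ‖ψ x‖ ≤ 1) ∧
      r = ∫ x, u x * (∑ i, fderiv ℝ (fun y => ψ y i) x (EuclideanSpace.single i 1)) }

/-- Total variation of `u`. -/
def tv (N : ℕ) (u : Euc N → ℝ) : ℝ := sSup (TVSet N u)

/-- `u` is a function of bounded variation on `ℝ^N`. -/
def MemBV (N : ℕ) (u : Euc N → ℝ) : Prop :=
  Integrable u ∧ BddAbove (TVSet N u)

/-- The `L¹` norm. -/
def nrm1 (N : ℕ) (u : Euc N → ℝ) : ℝ := (eLpNorm u 1 volume).toReal

/-- The `L^q` norm, `q` a real exponent. -/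
def nrmq (N : ℕ) (q : ℝ) (u : Euc N → ℝ) : ℝ :=
  (eLpNorm u (ENNReal.ofReal q) volume).toReal

/-- Surface area `ω_{N-1}` of the unit sphere in `ℝ^N`, as `N` times the
volume of the unit ball. -/
def omegaS (N : ℕ) : ℝ := N * (volume (Metric.ball (0 : Euc N) 1)).toReal

/-- The Gagliardo–Nirenberg ratio `‖u‖_q^q / (‖u‖_1^{q-(q-1)N} ‖u‖_{TV}^{(q-1)N})`. -/
def ratioQ (N : ℕ) (q : ℝ) (u : Euc N → ℝ) : ℝ :=
  nrmq N q u ^ q / (nrm1 N u ^ (q - (q-1)*N) * tv N u ^ ((q-1)*(N:ℝ)))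

/-- The best constant `E_q` on `BV(ℝ^N)`. -/
def EqSup (N : ℕ) (q : ℝ) : ℝ :=
  sSup { r | ∃ u : Euc N → ℝ, MemBV N u ∧ u ≠ 0 ∧ r = ratioQ N q u }

open scoped ENNReal

lemma ag_le (a b : ℝ) (ha : 0 < a) (hb : 0 < b) (hab : a + b = 1) (x y : ℝ≥0∞) :
    x ^ a * y ^ b ≤ ENNReal.ofReal a * x + ENNReal.ofReal b * y := by
  have ha' : ENNReal.ofReal a ≠ 0 := by simpa using ha
  have hb' : ENNReal.ofReal b ≠ 0 := by simpa using hb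
  rcases eq_or_ne x ⊤ with rfl | hx
  · rw [ENNReal.mul_top ha']; simp
  rcases eq_or_ne y ⊤ with rfl | hy
  · rw [ENNReal.mul_top hb']; simp
  lift x to NNReal using hx
  lift y to NNReal using hy
  have := NNReal.geom_mean_le_arith_mean2_weighted a.toNNReal b.toNNReal x y
    (by rw [← Real.toNNReal_add ha.le hb.le, hab, Real.toNNReal_one])
  rw [Real.coe_toNNReal _ ha.le, Real.coe_toNNReal _ hb.le] at this
  rw [← ENNReal.coe_rpow_of_nonneg _ ha.le, ← ENNReal.coe_rpow_of_nonneg _ hb.le]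
  rw [ENNReal.ofReal, ENNReal.ofReal]
  exact_mod_cast this

lemma bm1 (A B C : Set ℝ) (hA : MeasurableSet A) (hB : MeasurableSet B)
    (hA0 : A.Nonempty) (hB0 : B.Nonempty) (h : ∀ x ∈ A, ∀ y ∈ B, x + y ∈ C) :
    volume A + volume B ≤ volume C := by
  rw [hA.measure_eq_iSup_isCompact, hB.measure_eq_iSup_isCompact]
  have key : ∀ K ⊆ A, IsCompact K → ∀ L ⊆ B, IsCompact L → volume K + volume L ≤ volume C := by
    intro K hK hKc L hL hLc
    rcases K.eq_empty_or_nonempty with rfl | hK0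
    · obtain ⟨a, ha⟩ := hA0
      have : (fun x => x + -a) ⁻¹' L ⊆ C := by
        intro x hx
        have := h a ha _ (hL hx)
        simpa using this
      calc _ = volume L := by simp
        _ = volume ((fun x => x + -a) ⁻¹' L) := (measure_preimage_add_right volume (-a) L).symm
        _ ≤ _ := measure_mono this
    rcases L.eq_empty_or_nonempty with rfl | hL0
    · obtain ⟨b, hb⟩ := hB0
      have : (fun x => x + -b) ⁻¹' K ⊆ C := by
        intro x hx
        have := h _ (hK hx) b hb
        simpa using this
      calc _ = volume K := by simp
        _ = volume ((fun x => x + -b) ⁻¹' K) := (measure_preimage_add_right volume (-b) K).symm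
        _ ≤ _ := measure_mono this
    obtain ⟨k, hk, hkm⟩ := hKc.exists_isGreatest hK0
    obtain ⟨l, hl, hlm⟩ := hLc.exists_isLeast hL0
    set K' := (fun x => x + -l) ⁻¹' K
    set L' := (fun x => x + -k) ⁻¹' L
    have h1 : volume K' = volume K := measure_preimage_add_right volume (-l) K
    have h2 : volume L' = volume L := measure_preimage_add_right volume (-k) L
    have hm : MeasurableSet L' := (measurable_id.add_const (-k)) hLc.measurableSet
    have hi : volume (K' ∩ L') = 0 := by
      refine measure_mono_null (t := {k + l}) ?_ (by simp)
      rintro x ⟨hx1, hx2⟩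
      have := hkm hx1
      have := hlm hx2
      simp only [Set.mem_singleton_iff]
      linarith
    rw [← h1, ← h2, ← measure_union_add_inter K' hm, hi, add_zero]
    apply measure_mono
    rintro x (hx | hx)
    · have := h _ (hK hx) l (hL hl)
      simpa using this
    · have := h k (hK hk) _ (hL hx)
      simpa using this
  simp only [iSup_and']
  refine ENNReal.biSup_add_biSup_le' ⟨∅, by simp⟩ ⟨∅, by simp⟩ ?_
  rintro K ⟨hK, hKc⟩ L ⟨hL, hLc⟩
  exact key K hK hKc L hL hLc

lemma layer (f : ℝ → ℝ≥0∞) (hf : Measurable f) (hf1 : ∀ x, f x ≤ 1) :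
    ∫⁻ x, f x = ∫⁻ s in Set.Ioo (0:ℝ) 1, volume {x | ENNReal.ofReal s < f x} := by
  have hfin : ∀ x, f x ≠ ⊤ := fun x => ((hf1 x).trans_lt ENNReal.one_lt_top).ne
  have := lintegral_eq_lintegral_meas_lt (volume : Measure ℝ) (f := fun x => (f x).toReal)
    (Eventually.of_forall fun x => ENNReal.toReal_nonneg) hf.ennreal_toReal.aemeasurable
  simp only [ENNReal.ofReal_toReal (hfin _)] at this
  rw [this]
  have e : ∀ s ∈ Set.Ioi (0:ℝ), volume {a | s < (f a).toReal} = (Set.Ioo (0:ℝ) 1).indicator (fun s => volume {x | ENNReal.ofReal s < f x}) s := by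
    intro s hs
    by_cases h : s < 1
    · rw [Set.indicator_of_mem (show s ∈ Set.Ioo (0:ℝ) 1 from ⟨hs, h⟩)]
      congr 1; ext x
      exact (ENNReal.ofReal_lt_iff_lt_toReal (le_of_lt hs) (hfin x)).symm
    · rw [Set.indicator_of_notMem (fun h' => h h'.2)]
      convert measure_empty (μ := (volume : Measure ℝ))
      ext x
      simp only [Set.mem_ofPred_eq, Set.mem_empty_iff_false, iff_false, not_lt]
      have := ENNReal.toReal_mono ENNReal.one_ne_top (hf1 x)
      simp at this
      linarith
  rw [setLIntegral_congr_fun measurableSet_Ioi e, lintegral_indicator measurableSet_Ioo,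
    Measure.restrict_restrict measurableSet_Ioo]
  congr 2
  ext x; simp; tauto

lemma pl1_core (a b : ℝ) (ha : 0 < a) (hb : 0 < b) (hab : a + b = 1) (f g h : ℝ → ℝ≥0∞)
    (hf : Measurable f) (hg : Measurable g) (hh : Measurable h)
    (hf1 : ∀ x, f x ≤ 1) (hg1 : ∀ x, g x ≤ 1) (hf2 : ∀ s < 1, ∃ x, s < f x)
    (hg2 : ∀ s < 1, ∃ x, s < g x)
    (H : ∀ x y, f x ^ a * g y ^ b ≤ h (a * x + b * y)) :
    (∫⁻ x, f x) ^ a * (∫⁻ x, g x) ^ b ≤ ∫⁻ x, h x := by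
  refine (ag_le a b ha hb hab _ _).trans ?_
  have hmin : ∫⁻ x, min (h x) 1 ≤ ∫⁻ x, h x := lintegral_mono fun x => min_le_left _ _
  refine le_trans ?_ hmin
  rw [layer f hf hf1, layer g hg hg1, layer (fun x => min (h x) 1) (hh.min measurable_const)
    (fun x => min_le_right _ _)]
  have mono : ∀ k : ℝ → ℝ≥0∞, Measurable (fun s : ℝ => volume {x | ENNReal.ofReal s < k x}) := by
    intro k
    apply Antitone.measurable
    intro s t hst
    exact measure_mono fun x hx => lt_of_le_of_lt (ENNReal.ofReal_le_ofReal hst) hx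
  rw [← lintegral_const_mul _ (mono f), ← lintegral_const_mul _ (mono g),
    ← lintegral_add_left ((mono f).const_mul _)]
  refine setLIntegral_mono (mono _) ?_
  rintro s ⟨hs0, hs1⟩
  have hs1' : ENNReal.ofReal s < 1 := by simpa using hs1
  have hs0' : ENNReal.ofReal s ≠ 0 := by simpa using hs0
  set A := {x | ENNReal.ofReal s < f x}
  set B := {x | ENNReal.ofReal s < g x}
  have hA : MeasurableSet A := measurableSet_lt measurable_const hf
  have hB : MeasurableSet B := measurableSet_lt measurable_const hg
  have sc : ∀ (c : ℝ), 0 < c → ∀ S : Set ℝ, volume ((fun x => c⁻¹ * x) ⁻¹' S) = ENNReal.ofReal c * volume S := by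
    intro c hc S
    rw [Real.volume_preimage_mul_left (inv_ne_zero hc.ne')]
    simp [abs_of_pos hc]
  rw [← sc a ha, ← sc b hb]
  obtain ⟨x0, hx0⟩ := hf2 _ hs1'
  obtain ⟨y0, hy0⟩ := hg2 _ hs1'
  refine bm1 _ _ _ ((measurable_const_mul _) hA) ((measurable_const_mul _) hB)
    ⟨a * x0, ?_⟩ ⟨b * y0, ?_⟩ ?_
  · simpa [A, ha.ne'] using hx0
  · simpa [B, hb.ne'] using hy0
  · intro x hx y hy
    have hx' : ENNReal.ofReal s < f (a⁻¹ * x) := hx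
    have hy' : ENNReal.ofReal s < g (b⁻¹ * y) := hy
    show ENNReal.ofReal s < min _ _
    refine lt_min (lt_of_lt_of_le ?_ (?_ : f (a⁻¹ * x) ^ a * g (b⁻¹ * y) ^ b ≤ _)) hs1'
    · calc ENNReal.ofReal s = ENNReal.ofReal s ^ a * ENNReal.ofReal s ^ b := by
            rw [← ENNReal.rpow_add _ _ hs0' ENNReal.ofReal_ne_top, hab, ENNReal.rpow_one]
        _ < _ := ENNReal.mul_lt_mul (ENNReal.rpow_lt_rpow hx' ha) (ENNReal.rpow_lt_rpow hy' hb)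
    · have := H (a⁻¹ * x) (b⁻¹ * y)
      rwa [mul_inv_cancel_left₀ ha.ne', mul_inv_cancel_left₀ hb.ne'] at this

lemma pl1_bdd (a b : ℝ) (ha : 0 < a) (hb : 0 < b) (hab : a + b = 1) (f g h : ℝ → ℝ≥0∞)
    (hf : Measurable f) (hg : Measurable g) (hh : Measurable h) (M : ℝ≥0∞) (hM : M ≠ ⊤)
    (hf1 : ∀ x, f x ≤ M) (hg1 : ∀ x, g x ≤ M)
    (H : ∀ x y, f x ^ a * g y ^ b ≤ h (a * x + b * y)) :
    (∫⁻ x, f x) ^ a * (∫⁻ x, g x) ^ b ≤ ∫⁻ x, h x := by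
  set c := ⨆ x, f x with hc
  set d := ⨆ x, g x with hd
  have hcT : c ≠ ⊤ := ne_top_of_le_ne_top hM (iSup_le hf1)
  have hdT : d ≠ ⊤ := ne_top_of_le_ne_top hM (iSup_le hg1)
  by_cases hc0 : c = 0
  · have : ∀ x, f x = 0 := by simpa [hc] using hc0
    simp [this, ha]
  by_cases hd0 : d = 0
  · have : ∀ x, g x = 0 := by simpa [hd] using hd0
    simp [this, hb]
  have hk0 : c ^ a * d ^ b ≠ 0 := by
    simp [ENNReal.rpow_eq_zero_iff, hc0, hd0, hcT, hdT]
  have hkT : c ^ a * d ^ b ≠ ⊤ := ENNReal.mul_ne_top (ENNReal.rpow_ne_top_of_nonneg ha.le hcT)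
    (ENNReal.rpow_ne_top_of_nonneg hb.le hdT)
  have := pl1_core a b ha hb hab (fun x => c⁻¹ * f x) (fun x => d⁻¹ * g x)
    (fun x => (c ^ a * d ^ b)⁻¹ * h x) (hf.const_mul _) (hg.const_mul _) (hh.const_mul _)
    (fun x => by
      calc _ ≤ c⁻¹ * c := by gcongr; exact le_iSup f x
        _ = 1 := ENNReal.inv_mul_cancel hc0 hcT)
    (fun x => by
      calc _ ≤ d⁻¹ * d := by gcongr; exact le_iSup g x
        _ = 1 := ENNReal.inv_mul_cancel hd0 hdT)
    (fun s hs => by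
      have : c * s < c := by
        simpa using (ENNReal.mul_lt_mul_iff_right hc0 hcT).2 hs
      obtain ⟨x, hx⟩ := lt_iSup_iff.1 this
      refine ⟨x, ?_⟩
      rw [mul_comm, ← div_eq_mul_inv]
      rw [ENNReal.lt_div_iff_mul_lt (Or.inl hc0) (Or.inl hcT), mul_comm]
      exact hx)
    (fun s hs => by
      have : d * s < d := by
        simpa using (ENNReal.mul_lt_mul_iff_right hd0 hdT).2 hs
      obtain ⟨x, hx⟩ := lt_iSup_iff.1 this
      refine ⟨x, ?_⟩
      rw [mul_comm, ← div_eq_mul_inv]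
      rw [ENNReal.lt_div_iff_mul_lt (Or.inl hd0) (Or.inl hdT), mul_comm]
      exact hx)
    (fun x y => by
      rw [ENNReal.mul_rpow_of_nonneg _ _ ha.le, ENNReal.mul_rpow_of_nonneg _ _ hb.le,
        ENNReal.inv_rpow, ENNReal.inv_rpow, mul_mul_mul_comm,
        ← ENNReal.mul_inv (by simp [ENNReal.rpow_eq_zero_iff, hc0, hcT]) (by simp [ENNReal.rpow_eq_zero_iff, hd0, hdT])]
      gcongr
      exact H x y)
  rw [lintegral_const_mul _ hf, lintegral_const_mul _ hg, lintegral_const_mul _ hh,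
    ENNReal.mul_rpow_of_nonneg _ _ ha.le, ENNReal.mul_rpow_of_nonneg _ _ hb.le,
        ENNReal.inv_rpow, ENNReal.inv_rpow, mul_mul_mul_comm,
        ← ENNReal.mul_inv (by simp [ENNReal.rpow_eq_zero_iff, hc0, hcT]) (by simp [ENNReal.rpow_eq_zero_iff, hd0, hdT])] at this
  rwa [ENNReal.mul_le_mul_iff_right (by simpa using hkT) (by simpa using hk0)] at this

lemma pl1 (a b : ℝ) (ha : 0 < a) (hb : 0 < b) (hab : a + b = 1) (f g h : ℝ → ℝ≥0∞)
    (hf : Measurable f) (hg : Measurable g) (hh : Measurable h)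
    (H : ∀ x y, f x ^ a * g y ^ b ≤ h (a * x + b * y)) :
    (∫⁻ x, f x) ^ a * (∫⁻ x, g x) ^ b ≤ ∫⁻ x, h x := by
  by_cases hf0 : ∫⁻ x, f x = 0
  · simp [hf0, ha]
  by_cases hg0 : ∫⁻ x, g x = 0
  · simp [hg0, hb]
  have tr : ∀ k : ℝ → ℝ≥0∞, Measurable k →
      Tendsto (fun n : ℕ => ∫⁻ x, min (k x) n) atTop (𝓝 (∫⁻ x, k x)) := by
    intro k hk
    refine lintegral_tendsto_of_tendsto_of_monotone
      (fun n => (hk.min measurable_const).aemeasurable)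
      (Eventually.of_forall fun x n m hnm => min_le_min_left _ (by exact_mod_cast hnm))
      (Eventually.of_forall fun x => ?_)
    have : Tendsto (fun n : ℕ => min (k x) (n : ℝ≥0∞)) atTop (𝓝 (min (k x) ⊤)) :=
      tendsto_const_nhds.min ENNReal.tendsto_nat_nhds_top
    simpa using this
  have h1 := (ENNReal.continuous_rpow_const (y := a)).continuousAt.tendsto.comp (tr f hf)
  have h2 := (ENNReal.continuous_rpow_const (y := b)).continuousAt.tendsto.comp (tr g hg)
  have h3 := ENNReal.Tendsto.mul h1 (Or.inl (by simp [ENNReal.rpow_eq_zero_iff, hf0, ha.le])) h2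
    (Or.inl (by simp [ENNReal.rpow_eq_zero_iff, hg0, hb.le]))
  refine le_of_tendsto' h3 fun n => ?_
  refine pl1_bdd a b ha hb hab _ _ h (hf.min measurable_const) (hg.min measurable_const) hh n
    (by simp) (fun x => min_le_right _ _) (fun x => min_le_right _ _) fun x y => ?_
  refine le_trans ?_ (H x y)
  gcongr <;> exact min_le_left _ _

lemma lint_cons {n : ℕ} (f : (Fin (n+1) → ℝ) → ℝ≥0∞) (hf : Measurable f) :
    ∫⁻ x, f x = ∫⁻ s : ℝ, ∫⁻ y : Fin n → ℝ, f (Fin.cons s y) := by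
  have e := (volume_preserving_piFinSuccAbove (fun _ : Fin (n+1) => ℝ) 0).symm
  rw [← e.lintegral_comp hf]
  rw [Measure.volume_eq_prod, lintegral_prod (fun z => f ((MeasurableEquiv.piFinSuccAbove (fun _ : Fin (n+1) => ℝ) 0).symm z)) (hf.comp e.measurable).aemeasurable]
  simp [MeasurableEquiv.piFinSuccAbove]
  rfl

lemma meas_cons {n : ℕ} : Measurable (fun p : ℝ × (Fin n → ℝ) => (Fin.cons p.1 p.2 : Fin (n+1) → ℝ)) := by
  rw [measurable_pi_iff]
  intro i
  refine Fin.cases ?_ (fun j => ?_) i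
  · simpa using measurable_fst
  · simp; fun_prop

lemma pln (a b : ℝ) (ha : 0 < a) (hb : 0 < b) (hab : a + b = 1) (n : ℕ) :
    ∀ (f g h : (Fin n → ℝ) → ℝ≥0∞)
    (_ : Measurable f) (_ : Measurable g) (_ : Measurable h)
    (_ : ∀ x y, f x ^ a * g y ^ b ≤ h (a • x + b • y)),
    (∫⁻ x, f x) ^ a * (∫⁻ x, g x) ^ b ≤ ∫⁻ x, h x := by
  induction n with
  | zero =>
    intro f g h hf hg hh H
    rw [Measure.volume_pi_eq_dirac 0]
    simp only [lintegral_dirac]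
    simpa using H 0 0
  | succ n ih =>
    intro f g h hf hg hh H
    rw [lint_cons f hf, lint_cons g hg, lint_cons h hh]
    have mm : ∀ k : (Fin (n+1) → ℝ) → ℝ≥0∞, Measurable k →
        Measurable (fun s : ℝ => ∫⁻ y : Fin n → ℝ, k (Fin.cons s y)) := by
      intro k hk
      exact Measurable.lintegral_prod_right (f := fun (s : ℝ) (y : Fin n → ℝ) => k (Fin.cons s y)) (hk.comp meas_cons)
    refine pl1 a b ha hb hab _ _ _ (mm f hf) (mm g hg) (mm h hh) fun x y => ?_
    have sl : ∀ s : ℝ, Measurable (fun y : Fin n → ℝ => (Fin.cons s y : Fin (n+1) → ℝ)) :=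
      fun s => meas_cons.comp measurable_prodMk_left
    refine ih _ _ _ (hf.comp (sl _)) (hg.comp (sl _)) (hh.comp (sl _)) fun x' y' => ?_
    refine (H _ _).trans (le_of_eq ?_)
    congr 1
    ext i
    refine Fin.cases ?_ (fun j => ?_) i <;> simp


lemma bm_mult (N : ℕ) (a b : ℝ) (ha : 0 < a) (hb : 0 < b) (hab : a + b = 1) (A B C : Set (Euc N))
    (hA : MeasurableSet A) (hB : MeasurableSet B) (hC : MeasurableSet C)
    (H : ∀ x ∈ A, ∀ y ∈ B, a • x + b • y ∈ C) :
    volume A ^ a * volume B ^ b ≤ volume C := by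
  have e := PiLp.volume_preserving_toLp (Fin N)
  rw [← e.measure_preimage hA.nullMeasurableSet, ← e.measure_preimage hB.nullMeasurableSet,
    ← e.measure_preimage hC.nullMeasurableSet]
  have mA := e.measurable hA
  have mB := e.measurable hB
  have mC := e.measurable hC
  have := pln a b ha hb hab N _ _ _ (measurable_one.indicator mA) (measurable_one.indicator mB)
    (measurable_one.indicator mC) (by
      intro x y
      by_cases hx : x ∈ (WithLp.toLp 2 : (Fin N → ℝ) → Euc N) ⁻¹' A
      · by_cases hy : y ∈ (WithLp.toLp 2 : (Fin N → ℝ) → Euc N) ⁻¹' B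
        · have hxy : a • x + b • y ∈ (WithLp.toLp 2 : (Fin N → ℝ) → Euc N) ⁻¹' C := by
            have := H _ hx _ hy
            simpa using this
          rw [Set.indicator_of_mem hx, Set.indicator_of_mem hy, Set.indicator_of_mem hxy]
          simp
        · rw [Set.indicator_of_notMem hy]; simp [hb]
      · rw [Set.indicator_of_notMem hx]; simp [ha])
  rwa [lintegral_indicator_one mA, lintegral_indicator_one mB, lintegral_indicator_one mC] at this

abbrev Vb (N : ℕ) : ℝ := (volume (Metric.ball (0 : Euc N) 1)).toReal

lemma Vb_pos (N : ℕ) : 0 < Vb N :=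
  ENNReal.toReal_pos (Metric.measure_ball_pos _ _ one_pos).ne' measure_ball_lt_top.ne

lemma ofReal_Vb (N : ℕ) : ENNReal.ofReal (Vb N) = volume (Metric.ball (0 : Euc N) 1) :=
  ENNReal.ofReal_toReal measure_ball_lt_top.ne

lemma bm_add (N : ℕ) (hN : 2 ≤ N) (t : ℝ) (ht : 0 < t) (A C : Set (Euc N))
    (hA : MeasurableSet A) (hC : MeasurableSet C) (hAf : volume A ≠ ⊤)
    (H : ∀ x ∈ A, ∀ y, ‖y‖ < t → x + y ∈ C) :
    volume A + ENNReal.ofReal (N * t * Vb N ^ (1 / N : ℝ)) * volume A ^ (1 - 1 / N : ℝ) ≤ volume C := by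
  have hN0 : (0:ℝ) < N := by positivity
  have hNn : N ≠ 0 := by omega
  have hex : (0:ℝ) < 1 - 1 / N := by
    have : (2:ℝ) ≤ N := by exact_mod_cast hN
    rw [sub_pos, div_lt_one hN0]; linarith
  by_cases hA0 : volume A = 0
  · rw [hA0, ENNReal.zero_rpow_of_pos hex]; simp
  set α := (volume A).toReal with hα
  have hα0 : 0 < α := ENNReal.toReal_pos hA0 hAf
  have hAα : volume A = ENNReal.ofReal α := (ENNReal.ofReal_toReal hAf).symm
  have hV := Vb_pos N
  set a := α ^ (1 / N : ℝ) with ha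
  set b := t * Vb N ^ (1 / N : ℝ) with hb
  have ha0 : 0 < a := by positivity
  have hb0 : 0 < b := by positivity
  have haN : a ^ N = α := by
    rw [ha, ← Real.rpow_natCast, ← Real.rpow_mul hα0.le]; simp [hNn]
  have hbN : b ^ N = t ^ N * Vb N := by
    rw [hb, mul_pow, ← Real.rpow_natCast (Vb N ^ (1 / N : ℝ)), ← Real.rpow_mul hV.le]; simp [hNn]
  set p := a / (a + b) with hp
  set q := b / (a + b) with hq
  have hp0 : 0 < p := by positivity
  have hq0 : 0 < q := by positivity
  have hpq : p + q = 1 := by rw [hp, hq]; field_simp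
  set Q := ENNReal.ofReal ((a + b) ^ N) with hQ
  have h1 : volume ((fun x : Euc N => p • x) ⁻¹' A) = Q := by
    rw [Measure.addHaar_preimage_smul _ hp0.ne', hAα, ← ENNReal.ofReal_mul (by positivity), hQ]
    congr 1
    rw [finrank_euclideanSpace_fin, abs_of_pos (by positivity), ← haN, hp, div_pow]
    field_simp
  have h2 : volume (Metric.ball (0 : Euc N) (t / q)) = Q := by
    rw [Measure.addHaar_ball_of_pos _ _ (by positivity), ← ofReal_Vb, ← ENNReal.ofReal_mul (by positivity), hQ]
    congr 1
    rw [finrank_euclideanSpace_fin, div_pow, div_mul_eq_mul_div, ← hbN, hq, div_pow]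
    field_simp
  have h3 := bm_mult N p q hp0 hq0 hpq _ _ C
    ((measurable_const_smul p) hA) (measurableSet_ball (x := (0 : Euc N)) (ε := t / q)) hC (by
      intro x hx y hy
      refine H _ hx _ ?_
      rw [norm_smul, Real.norm_of_nonneg hq0.le]
      rw [mem_ball_zero_iff, lt_div_iff₀ hq0] at hy
      linarith)
  have hQ0 : Q ≠ 0 := by rw [hQ]; simp; positivity
  rw [h1, h2, ← ENNReal.rpow_add _ _ hQ0 ENNReal.ofReal_ne_top, hpq, ENNReal.rpow_one] at h3
  refine le_trans ?_ h3
  rw [hAα, ENNReal.ofReal_rpow_of_pos hα0, ← ENNReal.ofReal_mul (by positivity),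
    ← ENNReal.ofReal_add (by positivity) (by positivity), hQ]
  apply ENNReal.ofReal_le_ofReal
  have hb1 := one_add_mul_le_pow (a := b / a) (by have : 0 < b / a := by positivity
                                                  linarith) N
  have e1 : (a + b) ^ N = a ^ N * (1 + b / a) ^ N := by
    rw [← mul_pow]; congr 1; field_simp
  have e2 : α ^ (1 - 1 / N : ℝ) = α / a := by
    rw [Real.rpow_sub hα0, Real.rpow_one]
  rw [e1, haN, e2]
  calc _ = α * (1 + N * (b / a)) := by rw [hb]; field_simp
    _ ≤ _ := by gcongr

lemma layer_bd (N : ℕ) (p : ℝ) (hp : 1 < p) (v : Euc N → ℝ) (hv : Measurable v)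
    (hfin : eLpNorm v (ENNReal.ofReal p) volume ≠ ⊤) :
    eLpNorm v (ENNReal.ofReal p) volume ≤ ∫⁻ s in Set.Ioi (0:ℝ), volume {x | s < |v x|} ^ (1 / p) := by
  have hp0 : 0 < p := by linarith
  have hpe : (ENNReal.ofReal p).toReal = p := ENNReal.toReal_ofReal hp0.le
  rw [eLpNorm_eq_lintegral_rpow_enorm_toReal (by simpa using hp0) ENNReal.ofReal_ne_top, hpe] at hfin ⊢
  set I := ∫⁻ x, ‖v x‖ₑ ^ p with hI
  by_cases hI0 : I = 0
  · rw [hI0, ENNReal.zero_rpow_of_pos (by positivity)]; simp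
  have hIT : I ≠ ⊤ := by
    intro h; apply hfin; rw [h, ENNReal.top_rpow_of_pos (by positivity)]
  have hwm : Measurable (fun x => ‖v x‖ₑ ^ (p - 1)) := hv.enorm.pow_const _
  have h1 := lintegral_eq_lintegral_meas_lt ((volume : Measure (Euc N)).withDensity (fun x => ‖v x‖ₑ ^ (p - 1)))
    (f := fun x => |v x|) (Eventually.of_forall fun x => abs_nonneg _) hv.abs.aemeasurable
  rw [lintegral_withDensity_eq_lintegral_mul _ hwm (by fun_prop)] at h1
  have h2 : ∫⁻ x, ((fun x => ‖v x‖ₑ ^ (p - 1)) * fun x => ENNReal.ofReal |v x|) x = I := by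
    rw [hI]
    congr 1 with x
    simp only [Pi.mul_apply]
    rw [← Real.norm_eq_abs, ofReal_norm]
    by_cases h0 : ‖v x‖ₑ = 0
    · rw [h0, ENNReal.zero_rpow_of_pos hp0]; simp
    conv_lhs => rw [← ENNReal.rpow_one ‖v x‖ₑ, ← ENNReal.rpow_mul, ← ENNReal.rpow_add _ _ h0 (by simp)]
    congr 1; ring
  rw [h2] at h1
  have hinv : 0 ≤ 1 - 1 / p := by
    rw [sub_nonneg, div_le_one hp0]; exact hp.le
  have h3 : I ≤ ∫⁻ s in Set.Ioi (0:ℝ), volume {x | s < |v x|} ^ (1 / p) * I ^ (1 - 1 / p) := by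
    conv_lhs => rw [h1]
    refine lintegral_mono fun s => ?_
    have hS : MeasurableSet {x | s < |v x|} := measurableSet_lt measurable_const hv.abs
    rw [withDensity_apply _ hS]
    have := ENNReal.lintegral_mul_norm_pow_le (μ := (volume : Measure (Euc N)))
      (f := ({x | s < |v x|}).indicator 1) (g := fun x => ‖v x‖ₑ ^ p)
      (measurable_one.indicator hS).aemeasurable (hv.enorm.pow_const _).aemeasurable
      (p := 1 / p) (q := 1 - 1 / p) (by positivity) hinv (by ring)
    rw [lintegral_indicator_one hS] at this
    refine le_trans (le_of_eq ?_) this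
    rw [← lintegral_indicator hS]
    congr 1 with x
    by_cases hx : x ∈ {x | s < |v x|}
    · rw [Set.indicator_of_mem hx, Set.indicator_of_mem hx, ← ENNReal.rpow_mul]
      simp only [Pi.one_apply, ENNReal.one_rpow, one_mul]
      congr 1; field_simp
    · rw [Set.indicator_of_notMem hx, Set.indicator_of_notMem hx, ENNReal.zero_rpow_of_pos (by positivity)]
      simp
  rw [lintegral_mul_const' _ _ (ENNReal.rpow_ne_top_of_nonneg hinv hIT)] at h3
  have h4 : I = I ^ (1 / p) * I ^ (1 - 1 / p) := by
    rw [← ENNReal.rpow_add _ _ hI0 hIT]; simp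
  conv_lhs at h3 => rw [h4]
  rwa [ENNReal.mul_le_mul_iff_left] at h3
  · simp [ENNReal.rpow_eq_zero_iff, hI0, hIT]
  · exact ENNReal.rpow_ne_top_of_nonneg hinv hIT

lemma sob_layer (N : ℕ) (hN : 2 ≤ N) (v : Euc N → ℝ) (hv : ContDiff ℝ 1 v) (hc : HasCompactSupport v) :
    ENNReal.ofReal (N * Vb N ^ (1 / N : ℝ)) * ∫⁻ s in Set.Ioi (0:ℝ), volume {x | s < |v x|} ^ (1 - 1 / N : ℝ)
      ≤ ∫⁻ x, ‖fderiv ℝ v x‖ₑ := by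
  set K := Metric.cthickening 1 (tsupport v) with hK
  have hKc : IsCompact K := hc.isCompact.cthickening
  have hKm : MeasurableSet K := hKc.measurableSet
  have hKf : volume K ≠ ⊤ := hKc.measure_lt_top.ne
  have hdc : Continuous (fderiv ℝ v) := hv.continuous_fderiv one_ne_zero
  have huc : UniformContinuous (fderiv ℝ v) := (hc.fderiv ℝ).uniformContinuous_of_continuous hdc
  have hvd : Differentiable ℝ v := hv.differentiable one_ne_zero
  have hvm : Measurable v := hv.continuous.measurable
  refine ENNReal.le_of_forall_pos_le_add fun ε hε _ => ?_
  set δ : ℝ := ε / ((volume K).toReal + 1) with hδ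
  have hδ0 : 0 < δ := by have : (0:ℝ) < ε := hε
                         positivity
  obtain ⟨t0, ht0, hu⟩ := Metric.uniformContinuous_iff.1 huc δ hδ0
  set t := min t0 1 with ht
  have htp : 0 < t := by positivity
  set g : Euc N → ℝ := fun x => |v x| + t * (‖fderiv ℝ v x‖ + K.indicator (fun _ => δ) x) with hg
  have hind : ∀ x, 0 ≤ K.indicator (fun _ => δ) x := fun x => Set.indicator_nonneg (fun _ _ => hδ0.le) x
  have hg0 : ∀ x, 0 ≤ g x := fun x => by have := hind x; positivity
  have hgm : Measurable g := by
    have : Measurable (K.indicator (fun _ => δ)) := measurable_const.indicator hKm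
    have h2 := hdc.measurable.norm
    fun_prop
  have key : ∀ y x, dist x y < t → v y ≠ 0 → |v y| ≤ g x := by
    intro y x hxy hy
    have hxK : x ∈ K := by
      refine Metric.mem_cthickening_of_dist_le x y 1 _ (subset_tsupport _ hy) ?_
      exact hxy.le.trans (min_le_right _ _)
    have hb : ‖v y - v x‖ ≤ (‖fderiv ℝ v x‖ + δ) * ‖y - x‖ := by
      refine (convex_ball x t).norm_image_sub_le_of_norm_fderiv_le (𝕜 := ℝ) (fun z _ => hvd z) ?_
        (Metric.mem_ball_self htp) (by rwa [Metric.mem_ball, dist_comm])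
      intro z hz
      have := hu (lt_of_lt_of_le (Metric.mem_ball.1 hz) (min_le_left _ _))
      rw [dist_eq_norm] at this
      have h3 := norm_add_le (fderiv ℝ v z - fderiv ℝ v x) (fderiv ℝ v x)
      rw [sub_add_cancel] at h3
      linarith
    have h4 : ‖y - x‖ ≤ t := by rw [← dist_eq_norm, dist_comm]; exact hxy.le
    have h5 : |v y| ≤ |v x| + ‖v y - v x‖ := by
      have := abs_add_le (v x) (v y - v x)
      rw [Real.norm_eq_abs]; simpa using this
    simp only [hg, Set.indicator_of_mem hxK]
    have : (‖fderiv ℝ v x‖ + δ) * ‖y - x‖ ≤ (‖fderiv ℝ v x‖ + δ) * t := by gcongr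
    linarith
  have hlay := lintegral_eq_lintegral_meas_lt (volume : Measure (Euc N)) (Eventually.of_forall hg0) hgm.aemeasurable
  have hlayv := lintegral_eq_lintegral_meas_lt (volume : Measure (Euc N)) (f := fun x => |v x|)
    (Eventually.of_forall fun x => abs_nonneg _) hvm.abs.aemeasurable
  have hmono : Measurable (fun s : ℝ => volume {x | s < |v x|}) := by
    apply Antitone.measurable
    intro s r hsr
    exact measure_mono fun x hx => lt_of_le_of_lt hsr hx
  have hstep : (∫⁻ x, ENNReal.ofReal |v x|) + ENNReal.ofReal (N * t * Vb N ^ (1 / N : ℝ)) *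
      ∫⁻ s in Set.Ioi (0:ℝ), volume {x | s < |v x|} ^ (1 - 1 / N : ℝ) ≤ ∫⁻ x, ENNReal.ofReal (g x) := by
    rw [hlay, hlayv, ← lintegral_const_mul _ (hmono.pow_const _), ← lintegral_add_left hmono]
    refine setLIntegral_mono' measurableSet_Ioi fun s hs => ?_
    refine bm_add N hN t htp _ _ (measurableSet_lt measurable_const hvm.abs)
      (measurableSet_lt measurable_const hgm) ?_ ?_
    · refine ne_top_of_le_ne_top hc.isCompact.measure_lt_top.ne (measure_mono ?_)
      intro x hx
      apply subset_tsupport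
      intro h0
      have hx' : s < |v x| := hx
      rw [h0, abs_zero] at hx'
      exact lt_asymm hx' hs
    · intro x hx y hy
      have hx' : s < |v x| := hx
      refine lt_of_lt_of_le hx' (key x (x + y) (by simpa using hy) ?_)
      intro h0
      rw [h0, abs_zero] at hx'
      exact lt_asymm hx' hs
  have hgint : ∫⁻ x, ENNReal.ofReal (g x) = (∫⁻ x, ENNReal.ofReal |v x|) +
      ENNReal.ofReal t * ((∫⁻ x, ‖fderiv ℝ v x‖ₑ) + ENNReal.ofReal δ * volume K) := by
    have e : ∀ x, ENNReal.ofReal (g x) = ENNReal.ofReal |v x| + ENNReal.ofReal t * (‖fderiv ℝ v x‖ₑ + K.indicator (fun _ => ENNReal.ofReal δ) x) := by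
      intro x
      simp only [hg]
      rw [ENNReal.ofReal_add (abs_nonneg _) (by have := hind x; positivity), ENNReal.ofReal_mul htp.le,
        ENNReal.ofReal_add (norm_nonneg _) (hind x), ofReal_norm]
      congr 3
      by_cases h : x ∈ K <;> simp [h]
    simp_rw [e]
    have hm2 : Measurable (fun x => ‖fderiv ℝ v x‖ₑ) := hdc.measurable.enorm
    rw [lintegral_add_left (by fun_prop), lintegral_const_mul, lintegral_add_left hm2,
      lintegral_indicator_const hKm]
    exact hm2.add (measurable_const.indicator hKm)
  have hvfin : ∫⁻ x, ENNReal.ofReal |v x| ≠ ⊤ := by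
    have := (hv.continuous.integrable_of_hasCompactSupport hc (μ := volume)).2
    rw [hasFiniteIntegral_iff_norm] at this
    exact this.ne
  rw [hgint, ENNReal.add_le_add_iff_left hvfin] at hstep
  have e3 : (N * t * Vb N ^ (1 / N : ℝ)) = t * (N * Vb N ^ (1 / N : ℝ)) := by ring
  rw [e3, ENNReal.ofReal_mul htp.le, mul_assoc, ENNReal.mul_le_mul_iff_right (by simpa using htp) ENNReal.ofReal_ne_top] at hstep
  refine hstep.trans ?_
  gcongr
  rw [← ENNReal.ofReal_toReal hKf, ← ENNReal.ofReal_mul hδ0.le]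
  rw [ENNReal.ofReal_le_iff_le_toReal (by simp)]
  simp only [ENNReal.coe_toReal, hδ]
  rw [div_mul_eq_mul_div, div_le_iff₀ (by positivity)]
  gcongr
  simp


def dv {N : ℕ} (ψ : Euc N → Euc N) (x : Euc N) : ℝ :=
  ∑ i, fderiv ℝ (fun y => ψ y i) x (EuclideanSpace.single i 1)

lemma sum_single {N : ℕ} (L : Euc N →L[ℝ] ℝ) (z : Euc N) :
    ∑ i, L (EuclideanSpace.single i 1) * z i = L z := by
  conv_rhs => rw [← (EuclideanSpace.basisFun (Fin N) ℝ).sum_repr z]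
  simp [map_sum, mul_comm]

lemma cd_comp {N : ℕ} {ψ : Euc N → Euc N} (h : ContDiff ℝ 1 ψ) (i : Fin N) :
    ContDiff ℝ 1 (fun y => ψ y i) := contDiff_euclidean.1 h i

lemma dv_cont {N : ℕ} {ψ : Euc N → Euc N} (h : ContDiff ℝ 1 ψ) : Continuous (dv ψ) := by
  unfold dv
  refine continuous_finsetSum _ fun i _ => ?_
  exact ((cd_comp h i).continuous_fderiv one_ne_zero).clm_apply continuous_const

lemma dv_supp {N : ℕ} {ψ : Euc N → Euc N} (h : HasCompactSupport ψ) : HasCompactSupport (dv ψ) := by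
  refine HasCompactSupport.intro h.isCompact fun x hx => ?_
  rw [notMem_tsupport_iff_eventuallyEq] at hx
  unfold dv
  refine Finset.sum_eq_zero fun i _ => ?_
  have : (fun y => ψ y i) =ᶠ[𝓝 x] fun _ => (0:ℝ) := by
    filter_upwards [hx] with y hy
    simp [hy]
  rw [this.fderiv_eq]
  simp

lemma dv_smul {N : ℕ} {ψ : Euc N → Euc N} (h : ContDiff ℝ 1 ψ) {χ : Euc N → ℝ} (hχ : ContDiff ℝ 1 χ) (x : Euc N) :
    dv (fun y => χ y • ψ y) x = χ x * dv ψ x + fderiv ℝ χ x (ψ x) := by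
  unfold dv
  rw [← sum_single, Finset.mul_sum, ← Finset.sum_add_distrib]
  refine Finset.sum_congr rfl fun i _ => ?_
  have e : (fun y => (χ y • ψ y) i) = fun y => χ y * ψ y i := by ext y; simp
  rw [e, fderiv_fun_mul (hχ.differentiable one_ne_zero x) ((cd_comp h i).differentiable one_ne_zero x)]
  simp [mul_comm]

lemma dv_trans {N : ℕ} (ψ : Euc N → Euc N) (a x : Euc N) :
    dv (fun y => ψ (y + a)) x = dv ψ (x + a) := by
  unfold dv
  refine Finset.sum_congr rfl fun i _ => ?_
  rw [fderiv_comp_add_right (f := fun y => ψ y i)]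

lemma ibp {N : ℕ} {ψ : Euc N → Euc N} (h : ContDiff ℝ 1 ψ) (hc : HasCompactSupport ψ)
    {v : Euc N → ℝ} (hv : ContDiff ℝ 1 v) :
    ∫ x, v x * dv ψ x = - ∫ x, fderiv ℝ v x (ψ x) := by
  have hc' : ∀ i, HasCompactSupport (fun y => ψ y i) := fun i =>
    hc.comp_left (g := fun z : Euc N => z i) rfl
  have hdc := hv.continuous_fderiv one_ne_zero
  have i1 : ∀ i : Fin N, Integrable (fun x => v x * fderiv ℝ (fun y => ψ y i) x (EuclideanSpace.single i 1)) volume := by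
    intro i
    refine Continuous.integrable_of_hasCompactSupport ?_ ?_
    · exact hv.continuous.mul (((cd_comp h i).continuous_fderiv one_ne_zero).clm_apply continuous_const)
    · exact ((hc' i).fderiv_apply ℝ _).mul_left
  have i2 : ∀ i : Fin N, Integrable (fun x => fderiv ℝ v x (EuclideanSpace.single i 1) * ψ x i) volume := by
    intro i
    refine Continuous.integrable_of_hasCompactSupport ?_ (hc' i).mul_left
    exact (hdc.clm_apply continuous_const).mul (cd_comp h i).continuous
  have e : ∀ x, fderiv ℝ v x (ψ x) = ∑ i, fderiv ℝ v x (EuclideanSpace.single i 1) * ψ x i :=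
    fun x => (sum_single _ _).symm
  simp_rw [e, dv, Finset.mul_sum]
  rw [integral_finsetSum _ fun i _ => i1 i, integral_finsetSum _ fun i _ => i2 i, ← Finset.sum_neg_distrib]
  refine Finset.sum_congr rfl fun i _ => ?_
  refine integral_mul_fderiv_eq_neg_fderiv_mul_of_integrable (i2 i) (i1 i) ?_ ?_ ?_
  · refine Continuous.integrable_of_hasCompactSupport ?_ (hc' i).mul_left
    exact hv.continuous.mul (cd_comp h i).continuous
  · exact fun x _ => hv.differentiable one_ne_zero x
  · exact fun x _ => (cd_comp h i).differentiable one_ne_zero x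

lemma grad_le {N : ℕ} {v : Euc N → ℝ} (hv : ContDiff ℝ 2 v) (hc : HasCompactSupport v) (M : ℝ)
    (hM : ∀ ψ : Euc N → Euc N, ContDiff ℝ 1 ψ → HasCompactSupport ψ → (∀ x, ‖ψ x‖ ≤ 1) →
      ∫ x, v x * dv ψ x ≤ M) :
    ∫⁻ x, ‖fderiv ℝ v x‖ₑ ≤ ENNReal.ofReal M := by
  have hv1 : ContDiff ℝ 1 v := hv.of_le (by norm_num)
  set G : Euc N → Euc N := fun x => (InnerProductSpace.toDual ℝ (Euc N)).symm (fderiv ℝ v x) with hG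
  have hGn : ∀ x, ‖G x‖ = ‖fderiv ℝ v x‖ := fun x => LinearIsometryEquiv.norm_map _ _
  have hGi : ∀ x y, fderiv ℝ v x y = inner ℝ (G x) y := fun x y => by simp [hG]
  have hGc : ContDiff ℝ 1 G :=
    (InnerProductSpace.toDual ℝ (Euc N)).symm.contDiff.comp (hv.fderiv_right (by norm_num))
  have hGs : HasCompactSupport G := (hc.fderiv ℝ).comp_left (map_zero _)
  have hInt0 : Integrable (fun x => ‖G x‖) volume :=
    (hGc.continuous.integrable_of_hasCompactSupport hGs).norm
  set K := tsupport G
  have hKf : volume K ≠ ⊤ := hGs.isCompact.measure_lt_top.ne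
  have hKm : MeasurableSet K := hGs.isCompact.measurableSet
  have hδ : ∀ δ : ℝ, 0 < δ → ∫ x, ‖G x‖ ≤ M + δ * (volume K).toReal := by
    intro δ hδ
    set r : Euc N → ℝ := fun x => Real.sqrt (δ ^ 2 + ‖G x‖ ^ 2) with hr
    have hrpos : ∀ x, 0 < r x := fun x => Real.sqrt_pos.2 (by positivity)
    have hrc : ContDiff ℝ 1 r := (contDiff_const.add (hGc.norm_sq ℝ)).sqrt fun x => by positivity
    have hGr : ∀ x, ‖G x‖ ≤ r x := fun x => Real.le_sqrt_of_sq_le (by nlinarith)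
    set ψ : Euc N → Euc N := fun x => (-(r x)⁻¹) • G x with hψ
    have hψc : ContDiff ℝ 1 ψ := (hrc.inv fun x => (hrpos x).ne').neg.smul hGc
    have hψs : HasCompactSupport ψ := by
      refine HasCompactSupport.intro hGs.isCompact fun x hx => ?_
      simp only [hψ]
      rw [image_eq_zero_of_notMem_tsupport hx, smul_zero]
    have h1 := hM ψ hψc hψs (fun x => by
      simp only [hψ]
      rw [norm_smul, norm_neg, norm_inv, Real.norm_of_nonneg (hrpos x).le, inv_mul_le_iff₀ (hrpos x)]
      simpa using hGr x)
    rw [ibp hψc hψs hv1, ← integral_neg] at h1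
    have e1 : ∀ x, -(fderiv ℝ v x (ψ x)) = ‖G x‖ ^ 2 / r x := by
      intro x
      rw [hGi]
      simp only [hψ, inner_smul_right, real_inner_self_eq_norm_sq]
      field_simp
    simp_rw [e1] at h1
    have hcont : Continuous (fun x => ‖G x‖ ^ 2 / r x) :=
      (hGc.continuous.norm.pow 2).div hrc.continuous fun x => (hrpos x).ne'
    have hint2 : Integrable (fun x => ‖G x‖ ^ 2 / r x) volume := by
      refine hcont.integrable_of_hasCompactSupport ?_
      refine HasCompactSupport.intro hGs.isCompact fun x hx => ?_
      rw [image_eq_zero_of_notMem_tsupport hx]; simp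
    have hintK : Integrable (K.indicator fun _ => δ) volume :=
      (integrable_indicator_iff hKm).2 (integrableOn_const hKf)
    have h2 : ∫ x, ‖G x‖ ≤ ∫ x, (‖G x‖ ^ 2 / r x + K.indicator (fun _ => δ) x) := by
      refine integral_mono hInt0 (hint2.add hintK) fun x => ?_
      by_cases hx : x ∈ K
      · simp only [Set.indicator_of_mem hx]
        have hs : r x ^ 2 = δ ^ 2 + ‖G x‖ ^ 2 := Real.sq_sqrt (by positivity)
        have h0 := hrpos x
        have h3 : r x ≤ ‖G x‖ + δ := by
          rw [hr]; apply Real.sqrt_le_iff.2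
          constructor
          · positivity
          · nlinarith [norm_nonneg (G x)]
        rw [← sub_le_iff_le_add, le_div_iff₀ h0]
        rcases le_total ‖G x‖ δ with h4 | h4
        · nlinarith [norm_nonneg (G x)]
        · nlinarith [norm_nonneg (G x)]
      · rw [show K.indicator (fun _ => δ) x = 0 from Set.indicator_of_notMem hx _, image_eq_zero_of_notMem_tsupport hx]
        simp
    rw [integral_add hint2 hintK, integral_indicator hKm, setIntegral_const] at h2
    simp only [smul_eq_mul, Measure.real] at h2
    linarith
  have h3 : ∫ x, ‖G x‖ ≤ M := by
    have ht : Tendsto (fun δ : ℝ => M + δ * (volume K).toReal) (𝓝[>] 0) (𝓝 (M + 0 * (volume K).toReal)) := by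
      refine Tendsto.mono_left ?_ nhdsWithin_le_nhds
      exact (Continuous.tendsto (by fun_prop) 0)
    have := ge_of_tendsto ht (eventually_mem_nhdsWithin.mono fun δ h => hδ δ h)
    simpa using this
  calc ∫⁻ x, ‖fderiv ℝ v x‖ₑ = ∫⁻ x, ENNReal.ofReal ‖G x‖ := by
        congr 1 with x; rw [hGn, ofReal_norm]
    _ = ENNReal.ofReal (∫ x, ‖G x‖) := (ofReal_integral_eq_lintegral_ofReal hInt0 (Eventually.of_forall fun x => norm_nonneg _)).symm
    _ ≤ _ := ENNReal.ofReal_le_ofReal h3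

open scoped Convolution

lemma conv_le {N : ℕ} (η u : Euc N → ℝ) (hη : Integrable η) (hη0 : ∀ x, 0 ≤ η x) (hη1 : ∫ x, η x = 1)
    (hu : Integrable u) (D : Euc N → ℝ) (hD : Continuous D) (hDs : HasCompactSupport D) (T : ℝ)
    (hT : ∀ y, ∫ x, u (x - y) * D x ≤ T) :
    ∫ x, (η ⋆[ContinuousLinearMap.lsmul ℝ ℝ, volume] u) x * D x ≤ T := by
  obtain ⟨c, hc⟩ := hDs.exists_bound_of_continuous hD
  have h1 := Integrable.convolution_integrand (ContinuousLinearMap.lsmul ℝ ℝ) hη hu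
  have h2 : Integrable (fun p : Euc N × Euc N => η p.2 * u (p.1 - p.2) * D p.1) (volume.prod volume) := by
    refine Integrable.mul_bdd (c := c) (by simpa using h1) (hD.comp continuous_fst).aestronglyMeasurable
      (Eventually.of_forall fun p => hc p.1)
  have h3 := integral_integral_swap (f := fun x y => η y * u (x - y) * D x) h2
  have h4 : ∫ x, (η ⋆[ContinuousLinearMap.lsmul ℝ ℝ, volume] u) x * D x = ∫ x, ∫ y, η y * u (x - y) * D x := by
    congr 1 with x
    rw [integral_mul_const]
    rfl
  have h5 : ∀ y, ∫ x, η y * u (x - y) * D x = η y * ∫ x, u (x - y) * D x := by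
    intro y
    simp_rw [mul_assoc]
    rw [integral_const_mul]
  have h6 : Integrable (fun y => ∫ x, η y * u (x - y) * D x) volume := h2.integral_prod_right
  rw [h4, h3]
  calc _ ≤ ∫ y, η y * T := by
        refine integral_mono h6 (hη.mul_const T) fun y => ?_
        simp only [h5]
        exact mul_le_mul_of_nonneg_left (hT y) (hη0 y)
    _ = T := by rw [integral_mul_const, hη1, one_mul]

lemma tv_ge {N : ℕ} {u : Euc N → ℝ} (hu : MemBV N u) {ψ : Euc N → Euc N} (h : ContDiff ℝ 1 ψ)
    (hc : HasCompactSupport ψ) (h1 : ∀ x, ‖ψ x‖ ≤ 1) : ∫ x, u x * dv ψ x ≤ tv N u :=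
  le_csSup hu.2 ⟨ψ, h, hc, h1, rfl⟩

lemma tv_nonneg {N : ℕ} {u : Euc N → ℝ} (hu : MemBV N u) : 0 ≤ tv N u := by
  have := tv_ge hu (ψ := fun _ => 0) contDiff_const HasCompactSupport.zero (by simp)
  simpa [dv] using this

lemma approx_le {N : ℕ} {u : Euc N → ℝ} (hu : MemBV N u) (η χ : Euc N → ℝ) (hη : Integrable η) (hη0 : ∀ x, 0 ≤ η x)
    (hη1 : ∫ x, η x = 1) (hχ : ContDiff ℝ 1 χ) (hχs : HasCompactSupport χ) (hχ1 : ∀ x, ‖χ x‖ ≤ 1) (c : ℝ)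
    (hχd : ∀ x, ‖fderiv ℝ χ x‖ ≤ c) (ψ : Euc N → Euc N) (h : ContDiff ℝ 1 ψ) (hψc : HasCompactSupport ψ)
    (h1 : ∀ x, ‖ψ x‖ ≤ 1) :
    ∫ x, (χ x * (η ⋆[ContinuousLinearMap.lsmul ℝ ℝ, volume] u) x) * dv ψ x ≤ tv N u + c * ∫ x, ‖u x‖ := by
  have e : ∀ x, (χ x * (η ⋆[ContinuousLinearMap.lsmul ℝ ℝ, volume] u) x) * dv ψ x =
    (η ⋆[ContinuousLinearMap.lsmul ℝ ℝ, volume] u) x * (χ x * dv ψ x) := fun x => by ring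
  simp_rw [e]
  refine conv_le η u hη hη0 hη1 hu.1 _ (hχ.continuous.mul (dv_cont h)) hχs.mul_right _ fun y => ?_
  set θ : Euc N → Euc N := fun x => χ x • ψ x with hθ
  have hθc : ContDiff ℝ 1 θ := hχ.smul h
  have hθs : HasCompactSupport θ := hχs.smul_right
  have hθ1 : ∀ x, ‖θ x‖ ≤ 1 := fun x => by
    simp only [hθ]; rw [norm_smul]; exact mul_le_one₀ (hχ1 x) (norm_nonneg _) (h1 x)
  have e2 : ∀ x, χ x * dv ψ x = dv θ x - fderiv ℝ χ x (ψ x) := fun x => by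
    rw [dv_smul h hχ]; ring
  have huy : Integrable (fun x => u (x - y)) := hu.1.comp_sub_right y
  obtain ⟨c1, hc1⟩ := (dv_supp hθs).exists_bound_of_continuous (dv_cont hθc)
  have hb : ∀ x, ‖fderiv ℝ χ x (ψ x)‖ ≤ c := fun x => by
    refine ((fderiv ℝ χ x).le_opNorm _).trans ?_
    calc _ ≤ ‖fderiv ℝ χ x‖ * 1 := by gcongr; exact h1 x
      _ ≤ c := by simpa using hχd x
  have hbc : Continuous (fun x => fderiv ℝ χ x (ψ x)) :=
    (hχ.continuous_fderiv one_ne_zero).clm_apply h.continuous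
  have i1 : Integrable (fun x => u (x - y) * dv θ x) :=
    huy.mul_bdd (c := c1) (dv_cont hθc).aestronglyMeasurable (Eventually.of_forall hc1)
  have i2 : Integrable (fun x => u (x - y) * fderiv ℝ χ x (ψ x)) :=
    huy.mul_bdd (c := c) hbc.aestronglyMeasurable (Eventually.of_forall hb)
  have e4 : ∀ x, u (x - y) * (χ x * dv ψ x) = u (x - y) * dv θ x - u (x - y) * fderiv ℝ χ x (ψ x) :=
    fun x => by rw [e2, mul_sub]
  refine (integral_congr_ae (Eventually.of_forall e4)).le.trans ?_
  rw [integral_sub i1 i2, sub_eq_add_neg]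
  refine add_le_add ?_ ?_
  · rw [← integral_add_right_eq_self _ y]
    have e3 : ∀ x, u (x + y - y) * dv θ (x + y) = u x * dv (fun z => θ (z + y)) x := fun x => by
      rw [dv_trans, add_sub_cancel_right]
    simp_rw [e3]
    refine tv_ge hu ?_ ?_ fun x => hθ1 _
    · exact hθc.comp (contDiff_id.add contDiff_const)
    · exact hθs.comp_homeomorph (Homeomorph.addRight y)
  · rw [← integral_neg, ← integral_const_mul, ← integral_sub_right_eq_self (fun x => c * ‖u x‖) y]
    refine integral_mono i2.neg (huy.norm.const_mul c) fun x => ?_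
    simp only []
    refine (le_abs_self _).trans ?_
    rw [abs_neg, abs_mul, mul_comm]
    exact mul_le_mul_of_nonneg_right (hb x) (abs_nonneg _)

lemma sobolev (N : ℕ) (hN : 2 ≤ N) {u : Euc N → ℝ} (hu : MemBV N u) :
    eLpNorm u (ENNReal.ofReal (N / (N - 1))) volume ≤ ENNReal.ofReal (tv N u / (N * Vb N ^ (1 / N : ℝ))) := by
  have hN2 : (2:ℝ) ≤ N := by exact_mod_cast hN
  set κ := N * Vb N ^ (1 / N : ℝ) with hκ
  have hκ0 : 0 < κ := by have := Vb_pos N; positivity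
  set p : ℝ := N / (N - 1) with hp
  have hp1 : 1 < p := by rw [hp, lt_div_iff₀ (by linarith)]; linarith
  have hpi : 1 / p = 1 - 1 / N := by rw [hp]; field_simp
  have hsm : ∀ (v : Euc N → ℝ), ContDiff ℝ 2 v → HasCompactSupport v → ∀ M : ℝ,
     (∀ ψ : Euc N → Euc N, ContDiff ℝ 1 ψ → HasCompactSupport ψ → (∀ x, ‖ψ x‖ ≤ 1) →
      ∫ x, v x * dv ψ x ≤ M) → eLpNorm v (ENNReal.ofReal p) volume ≤ ENNReal.ofReal (M / κ) := by
    intro v hv hvc M hM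
    have a1 := grad_le hv hvc M hM
    have a2 := sob_layer N hN v (hv.of_le (by norm_num)) hvc
    have a3 := layer_bd N p hp1 v hv.continuous.measurable
      (hv.continuous.memLp_of_hasCompactSupport hvc).2.ne
    rw [hpi] at a3
    rw [ENNReal.ofReal_div_of_pos hκ0, ENNReal.le_div_iff_mul_le (Or.inl (by simpa using hκ0)) (Or.inl ENNReal.ofReal_ne_top), mul_comm]
    exact (mul_le_mul_right a3 _).trans (a2.trans a1)
  let φ : ℕ → ContDiffBump (0 : Euc N) := fun n => ⟨1 / (n + 1), 2 * (1 / (n + 1)), by positivity, by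
    have : (0:ℝ) < 1 / (n + 1) := by positivity
    linarith⟩
  let b : ContDiffBump (0 : Euc N) := ⟨1, 2, one_pos, by norm_num⟩
  have hbc : ContDiff ℝ 2 (b : Euc N → ℝ) := b.contDiff
  obtain ⟨c0, hc0⟩ := (b.hasCompactSupport.fderiv ℝ).exists_bound_of_continuous (hbc.continuous_fderiv two_ne_zero)
  let s : ℕ → ℝ := fun n => 1 / (n + 1)
  have hs0 : ∀ n, 0 < s n := fun n => by positivity
  have hs : Tendsto s atTop (𝓝 0) := tendsto_one_div_add_atTop_nhds_zero_nat
  let χ : ℕ → Euc N → ℝ := fun n x => b (s n • x)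
  have hχc : ∀ n, ContDiff ℝ 2 (χ n) := fun n => hbc.comp (contDiff_const_smul (s n))
  have hχs : ∀ n, HasCompactSupport (χ n) := fun n =>
    b.hasCompactSupport.comp_homeomorph (Homeomorph.smulOfNeZero (s n) (hs0 n).ne')
  have hχ1 : ∀ n x, ‖χ n x‖ ≤ 1 := fun n x => by
    rw [Real.norm_of_nonneg b.nonneg]; exact b.le_one
  have hχd : ∀ n x, ‖fderiv ℝ (χ n) x‖ ≤ s n * c0 := by
    intro n x
    have : fderiv ℝ (χ n) x = s n • fderiv ℝ b (s n • x) := fderiv_comp_smul (s n)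
    rw [this, norm_smul, Real.norm_of_nonneg (hs0 n).le]
    exact mul_le_mul_of_nonneg_left (hc0 _) (hs0 n).le
  let η : ℕ → Euc N → ℝ := fun n => (φ n).normed volume
  let w : ℕ → Euc N → ℝ := fun n => (η n) ⋆[ContinuousLinearMap.lsmul ℝ ℝ, volume] u
  have hw : ∀ n, ContDiff ℝ 2 (w n) := fun n =>
    (φ n).hasCompactSupport_normed.contDiff_convolution_left _ (φ n).contDiff_normed hu.1.locallyIntegrable
  let v : ℕ → Euc N → ℝ := fun n x => χ n x * w n x
  have hvc : ∀ n, ContDiff ℝ 2 (v n) := fun n => (hχc n).mul (hw n)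
  have hvs : ∀ n, HasCompactSupport (v n) := fun n => (hχs n).mul_right
  have hbd : ∀ n, eLpNorm (v n) (ENNReal.ofReal p) volume ≤ ENNReal.ofReal ((tv N u + s n * c0 * ∫ x, ‖u x‖) / κ) := by
    intro n
    refine hsm _ (hvc n) (hvs n) _ fun ψ h1 h2 h3 => ?_
    exact approx_le hu (η n) (χ n) (φ n).integrable_normed (φ n).nonneg_normed (φ n).integral_normed
      ((hχc n).of_le (by norm_num)) (hχs n) (hχ1 n) _ (hχd n) ψ h1 h2 h3
  have hlim : ∀ᵐ x, Tendsto (fun n => v n x) atTop (𝓝 (u x)) := by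
    have := ContDiffBump.ae_convolution_tendsto_right_of_locallyIntegrable (μ := volume) (φ := φ) (l := atTop) (K := 2) (g := u)
      (by simpa using hs.const_mul 2) (Eventually.of_forall fun n => le_rfl) hu.1.locallyIntegrable
    filter_upwards [this] with x hx
    have h1 : Tendsto (fun n => χ n x) atTop (𝓝 1) := by
      have h2 : Tendsto (fun n => s n • x) atTop (𝓝 ((0:ℝ) • x)) := hs.smul_const x
      have h3 := (b.continuous.tendsto ((0:ℝ) • x)).comp h2
      have h4 : b ((0:ℝ) • x) = 1 := by rw [zero_smul]; exact b.one_of_mem_closedBall (Metric.mem_closedBall_self zero_le_one)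
      rw [h4] at h3
      exact h3
    simpa using h1.mul hx
  refine (Lp.eLpNorm_lim_le_liminf_eLpNorm (fun n => (hvc n).continuous.aestronglyMeasurable) u hlim).trans ?_
  have ht : Tendsto (fun n => ENNReal.ofReal ((tv N u + s n * c0 * ∫ x, ‖u x‖) / κ)) atTop (𝓝 (ENNReal.ofReal (tv N u / κ))) := by
    refine ENNReal.tendsto_ofReal ?_
    have : Tendsto (fun n => (tv N u + s n * c0 * ∫ x, ‖u x‖) / κ) atTop (𝓝 ((tv N u + 0 * c0 * ∫ x, ‖u x‖) / κ)) :=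
      (((hs.mul_const c0).mul_const _).const_add _).div_const _
    simpa using this
  rw [← ht.liminf_eq]
  exact liminf_le_liminf (Eventually.of_forall hbd)


lemma kappa_pow (N : ℕ) (hN : 2 ≤ N) (q : ℝ) :
    ((N * Vb N ^ (1 / N : ℝ)) ^ ((q - 1) * (N:ℝ)))⁻¹ = (1 / ((N : ℝ) ^ (N - 1) * omegaS N)) ^ (q - 1) := by
  have hV := Vb_pos N
  have hN0 : (0:ℝ) < N := by positivity
  have h1 : (N * Vb N ^ (1 / N : ℝ)) ^ (N : ℝ) = (N : ℝ) ^ (N - 1) * omegaS N := by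
    rw [Real.mul_rpow hN0.le (by positivity), ← Real.rpow_mul hV.le, one_div, inv_mul_cancel₀ hN0.ne', Real.rpow_one,
      Real.rpow_natCast, omegaS, ← mul_assoc, ← pow_succ]
    congr 2; omega
  rw [mul_comm (q - 1) (N:ℝ), Real.rpow_mul (by positivity), h1, one_div, Real.inv_rpow]
  rw [omegaS]; positivity

lemma main_ineq (N : ℕ) (hN : 2 ≤ N) (q : ℝ) (hq1 : 1 < q)
    (hq2 : q ≤ (N : ℝ) / ((N : ℝ) - 1)) {u : Euc N → ℝ} (hu : MemBV N u) :
    nrmq N q u ^ q ≤ (1 / ((N : ℝ) ^ (N - 1) * omegaS N)) ^ (q - 1) *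
      (nrm1 N u ^ (q - (q-1)*N) * tv N u ^ ((q-1)*(N:ℝ))) := by
  have hN2 : (2:ℝ) ≤ N := by exact_mod_cast hN
  have hN1 : (0:ℝ) < N - 1 := by linarith
  have hq0 : 0 < q := by linarith
  have hS := sobolev N hN hu
  have htv := tv_nonneg hu
  rw [← kappa_pow N hN q]
  set κ := N * Vb N ^ (1 / N : ℝ) with hκ
  have hκ0 : 0 < κ := by have := Vb_pos N; positivity
  set p : ℝ := N / (N - 1) with hp
  have hp0 : 0 < p := by positivity
  set a := q - (q - 1) * N with ha
  have ha0 : 0 ≤ a := by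
    rw [hp, le_div_iff₀ hN1] at hq2
    rw [ha]; linarith
  set b := (q - 1) * (N : ℝ) with hb
  have hb0 : 0 ≤ b := by rw [hb]; have : 0 < q - 1 := by linarith
                         positivity
  set c := (q - 1) * ((N : ℝ) - 1) with hc
  have hc0 : 0 ≤ c := by rw [hc]; have : 0 < q - 1 := by linarith
                         positivity
  have hpc : p * c = b := by rw [hp, hc, hb]; field_simp
  have hum : AEMeasurable (fun x => ‖u x‖ₑ) := hu.1.1.enorm
  have hH := ENNReal.lintegral_mul_norm_pow_le (μ := (volume : Measure (Euc N))) (f := fun x => ‖u x‖ₑ)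
    (g := fun x => ‖u x‖ₑ ^ p) hum (hum.pow_const _) ha0 hc0 (by rw [ha, hc]; ring)
  have e1 : ∀ x, ‖u x‖ₑ ^ a * (‖u x‖ₑ ^ p) ^ c = ‖u x‖ₑ ^ q := by
    intro x
    rw [← ENNReal.rpow_mul, ← ENNReal.rpow_add_of_nonneg _ _ ha0 (by positivity), hpc]
    congr 1; rw [ha, hb]; ring
  simp_rw [e1] at hH
  have e2 : (∫⁻ x, ‖u x‖ₑ ^ p) ^ c = (eLpNorm u (ENNReal.ofReal p) volume) ^ b := by
    rw [eLpNorm_eq_lintegral_rpow_enorm_toReal (by simpa using hp0) ENNReal.ofReal_ne_top,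
      ENNReal.toReal_ofReal hp0.le, ← ENNReal.rpow_mul, ← hpc]
    congr 1; field_simp
  have e3 : ENNReal.ofReal (nrm1 N u) = ∫⁻ x, ‖u x‖ₑ := by
    rw [nrm1, ENNReal.ofReal_toReal, eLpNorm_one_eq_lintegral_enorm]
    exact (memLp_one_iff_integrable.2 hu.1).2.ne
  have e4 : nrmq N q u ^ q = (∫⁻ x, ‖u x‖ₑ ^ q).toReal := by
    rw [nrmq, eLpNorm_eq_lintegral_rpow_enorm_toReal (by simpa using hq0) ENNReal.ofReal_ne_top,
      ENNReal.toReal_ofReal hq0.le, ENNReal.toReal_rpow, ← ENNReal.rpow_mul, one_div, inv_mul_cancel₀ hq0.ne', ENNReal.rpow_one]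
  have hn1 : 0 ≤ nrm1 N u := ENNReal.toReal_nonneg
  have h5 : ∫⁻ x, ‖u x‖ₑ ^ q ≤ ENNReal.ofReal (nrm1 N u ^ a * (tv N u / κ) ^ b) := by
    refine hH.trans ?_
    rw [e2, ← e3, ENNReal.ofReal_mul (by positivity), ENNReal.ofReal_rpow_of_nonneg hn1 ha0]
    gcongr
    rw [← ENNReal.ofReal_rpow_of_nonneg (by positivity) hb0]
    exact ENNReal.rpow_le_rpow hS hb0
  rw [e4]
  refine (ENNReal.toReal_mono ENNReal.ofReal_ne_top h5).trans ?_
  rw [ENNReal.toReal_ofReal (by positivity), Real.div_rpow htv hκ0.le]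
  apply le_of_eq
  field_simp

lemma ratio_le (N : ℕ) (hN : 2 ≤ N) (q : ℝ) (hq1 : 1 < q)
    (hq2 : q ≤ (N : ℝ) / ((N : ℝ) - 1)) {u : Euc N → ℝ} (hu : MemBV N u) :
    ratioQ N q u ≤ (1 / ((N : ℝ) ^ (N - 1) * omegaS N)) ^ (q - 1) := by
  have htv := tv_nonneg hu
  have hn1 : 0 ≤ nrm1 N u := ENNReal.toReal_nonneg
  have hom : 0 < omegaS N := by
    have := Vb_pos N
    rw [omegaS]; positivity
  exact div_le_of_le_mul₀ (by positivity) (by positivity) (main_ineq N hN q hq1 hq2 hu)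

lemma lip_ibp {N : ℕ} {f : Euc N → ℝ} {C : NNReal} (hf : LipschitzWith C f)
    {ψ : Euc N → Euc N} (h : ContDiff ℝ 1 ψ) (hc : HasCompactSupport ψ) :
    ∫ x, f x * dv ψ x = - ∫ x, fderiv ℝ f x (ψ x) := by
  have hc' : ∀ i, HasCompactSupport (fun y => ψ y i) := fun i =>
    hc.comp_left (g := fun z : Euc N => z i) rfl
  have i1 : ∀ i : Fin N, Integrable (fun x => f x * fderiv ℝ (fun y => ψ y i) x (EuclideanSpace.single i 1)) volume := by
    intro i
    refine Continuous.integrable_of_hasCompactSupport ?_ ?_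
    · exact hf.continuous.mul (((cd_comp h i).continuous_fderiv one_ne_zero).clm_apply continuous_const)
    · exact ((hc' i).fderiv_apply ℝ _).mul_left
  have i2 : ∀ i : Fin N, Integrable (fun x => lineDeriv ℝ f x (-EuclideanSpace.single i 1) * ψ x i) volume := by
    intro i
    refine Integrable.bdd_mul (c := C * ‖(-EuclideanSpace.single i 1 : Euc N)‖)
      ((cd_comp h i).continuous.integrable_of_hasCompactSupport (hc' i)) ?_ ?_
    · exact (measurable_lineDeriv hf.continuous).aestronglyMeasurable
    · exact Eventually.of_forall fun x => norm_lineDeriv_le_of_lipschitz ℝ hf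
  simp_rw [dv, Finset.mul_sum]
  rw [integral_finsetSum _ fun i _ => i1 i]
  have e : ∀ i : Fin N, ∫ x, f x * fderiv ℝ (fun y => ψ y i) x (EuclideanSpace.single i 1) =
      ∫ x, lineDeriv ℝ f x (-EuclideanSpace.single i 1) * ψ x i := by
    intro i
    obtain ⟨D, hD⟩ := (cd_comp h i).lipschitzWith_of_hasCompactSupport (hc' i) one_ne_zero
    have := hf.integral_lineDeriv_mul_eq (μ := volume) hD (hc' i) (-EuclideanSpace.single i 1)
    rw [this]
    congr 1 with x
    rw [neg_neg, ((cd_comp h i).differentiable one_ne_zero x).lineDeriv_eq_fderiv, mul_comm]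
  simp_rw [e]
  rw [← integral_finsetSum _ fun i _ => i2 i, ← integral_neg]
  refine integral_congr_ae ?_
  filter_upwards [hf.ae_differentiableAt (μ := volume)] with x hx
  rw [← sum_single, ← Finset.sum_neg_distrib]
  refine Finset.sum_congr rfl fun i _ => ?_
  rw [hx.lineDeriv_eq_fderiv, map_neg, neg_mul]

lemma ball_tv_eps {N : ℕ} (ε : ℝ) (hε : 0 < ε) 
    {ψ : Euc N → Euc N} (h : ContDiff ℝ 1 ψ) (hc : HasCompactSupport ψ) (h1 : ∀ x, ‖ψ x‖ ≤ 1)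
    (c : ℝ) (hb : ∀ x, ‖dv ψ x‖ ≤ c) :
    ∫ x, (Metric.ball (0 : Euc N) 1).indicator 1 x * dv ψ x ≤ 
      (1 / ε + c) * (((1 + ε) ^ N - 1) * Vb N) := by
  set f : Euc N → ℝ := fun x => max 0 (min 1 ((1 + ε - ‖x‖) / ε)) with hf
  have hlip0 : LipschitzWith (1 / ε).toNNReal (fun x : Euc N => (1 + ε - ‖x‖) / ε) := by
    refine LipschitzWith.of_dist_le_mul fun x y => ?_
    rw [Real.coe_toNNReal _ (by positivity), Real.dist_eq, dist_eq_norm, ← sub_div, abs_div, abs_of_pos hε,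
      div_eq_mul_one_div, mul_comm]
    gcongr
    rw [show 1 + ε - ‖x‖ - (1 + ε - ‖y‖) = ‖y‖ - ‖x‖ by ring, norm_sub_rev]
    exact abs_norm_sub_norm_le y x
  have hlip : LipschitzWith (1 / ε).toNNReal f := (hlip0.const_min 1).const_max 0
  have hf0 : ∀ x, 0 ≤ f x := fun x => le_max_left _ _
  have hf1 : ∀ x, f x ≤ 1 := fun x => max_le zero_le_one (min_le_left _ _)
  have hin : ∀ x, ‖x‖ < 1 → f x = 1 := by
    intro x hx
    simp only [hf]
    rw [min_eq_left, max_eq_right zero_le_one]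
    rw [le_div_iff₀ hε]; linarith
  have hout : ∀ x, 1 + ε < ‖x‖ → f x = 0 := by
    intro x hx
    simp only [hf]
    apply max_eq_left
    refine (min_le_right _ _).trans ?_
    apply div_nonpos_of_nonpos_of_nonneg <;> linarith
  set S : Set (Euc N) := Metric.closedBall 0 (1 + ε) \ Metric.ball 0 1 with hS
  have hSm : MeasurableSet S := measurableSet_closedBall.diff measurableSet_ball
  have hSf : volume S ≠ ⊤ := ne_top_of_le_ne_top measure_closedBall_lt_top.ne (measure_mono Set.diff_subset)
  have hSv : (volume S).toReal = ((1 + ε) ^ N - 1) * Vb N := by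
    rw [hS, measure_diff (Metric.ball_subset_closedBall.trans (Metric.closedBall_subset_closedBall (by linarith)))
      measurableSet_ball.nullMeasurableSet measure_ball_lt_top.ne, Measure.addHaar_closedBall _ _ (by positivity), ← ofReal_Vb,
      ← ENNReal.ofReal_mul (by positivity), ← ENNReal.ofReal_sub _ (Vb_pos N).le, finrank_euclideanSpace_fin, ENNReal.toReal_ofReal]
    · ring
    · have : 1 ≤ (1 + ε) ^ N := one_le_pow₀ (by linarith)
      nlinarith [Vb_pos N]
  have hInt0 : ∀ d : ℝ, Integrable (S.indicator fun _ => d) volume := fun d =>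
    (integrable_indicator_iff hSm).2 (integrableOn_const hSf)
  have hintv : ∀ d : ℝ, ∫ x, S.indicator (fun _ => d) x = d * (((1 + ε) ^ N - 1) * Vb N) := by
    intro d
    rw [integral_indicator hSm, setIntegral_const, Measure.real, hSv, smul_eq_mul, mul_comm]
  have hfd : ∀ x, -(fderiv ℝ f x (ψ x)) ≤ S.indicator (fun _ => 1 / ε) x := by
    intro x
    by_cases hx : x ∈ S
    · rw [Set.indicator_of_mem hx]
      refine (neg_le_abs _).trans ?_
      refine ((fderiv ℝ f x).le_opNorm _).trans ?_
      calc _ ≤ ‖fderiv ℝ f x‖ * 1 := by gcongr; exact h1 x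
        _ ≤ _ := by
          rw [mul_one]
          have := norm_fderiv_le_of_lipschitz ℝ hlip (x₀ := x)
          rwa [Real.coe_toNNReal _ (by positivity)] at this
    · rw [Set.indicator_of_notMem hx]
      have : fderiv ℝ f x = 0 := by
        by_cases hx1 : ‖x‖ < 1
        · have : f =ᶠ[𝓝 x] fun _ => 1 := by
            filter_upwards [(isOpen_lt continuous_norm continuous_const).mem_nhds hx1] with y hy
            exact hin y hy
          rw [this.fderiv_eq]; simp
        · have hx2 : 1 + ε < ‖x‖ := by
            by_contra h'
            apply hx
            simp only [hS, Set.mem_diff, mem_closedBall_zero_iff, mem_ball_zero_iff]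
            exact ⟨not_lt.1 h', hx1⟩
          have : f =ᶠ[𝓝 x] fun _ => 0 := by
            filter_upwards [(isOpen_lt continuous_const continuous_norm).mem_nhds hx2] with y hy
            exact hout y hy
          rw [this.fderiv_eq]; simp
      rw [this]; simp
  have hfi : Integrable (fun x => f x * dv ψ x) volume :=
    (hlip.continuous.mul (dv_cont h)).integrable_of_hasCompactSupport (dv_supp hc).mul_left
  have hA : ∫ x, f x * dv ψ x ≤ 1 / ε * (((1 + ε) ^ N - 1) * Vb N) := by
    rw [lip_ibp hlip h hc, ← integral_neg, ← hintv]
    by_cases hi : Integrable (fun x => -(fderiv ℝ f x (ψ x))) volume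
    · exact integral_mono hi (hInt0 _) hfd
    · rw [integral_undef hi]
      exact integral_nonneg fun x => Set.indicator_nonneg (fun _ _ => by positivity) x
  have hBi : Integrable (fun x => (Metric.ball (0 : Euc N) 1).indicator 1 x * dv ψ x) volume := by
    refine Integrable.mul_bdd (c := c) ?_ (dv_cont h).aestronglyMeasurable (Eventually.of_forall hb)
    exact (integrable_indicator_iff measurableSet_ball).2 (integrableOn_const measure_ball_lt_top.ne)
  calc _ ≤ ∫ x, (f x * dv ψ x + S.indicator (fun _ => c) x) := by
        refine integral_mono hBi (hfi.add (hInt0 c)) fun x => ?_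
        have hbx := abs_le.1 (hb x)
        have hc0 : 0 ≤ c := (norm_nonneg _).trans (hb x)
        by_cases hx1 : ‖x‖ < 1
        · have hxb : x ∈ Metric.ball (0 : Euc N) 1 := by simpa using hx1
          simp only [Set.indicator_of_mem hxb, Pi.one_apply, hin x hx1]
          have := Set.indicator_nonneg (s := S) (f := fun _ => c) (fun _ _ => hc0) x
          linarith
        · have hxb : x ∉ Metric.ball (0 : Euc N) 1 := by simpa using hx1
          simp only [Set.indicator_of_notMem hxb, zero_mul]
          by_cases hx2 : 1 + ε < ‖x‖
          · rw [hout x hx2]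
            have := Set.indicator_nonneg (s := S) (f := fun _ => c) (fun _ _ => hc0) x
            linarith
          · have hxS : x ∈ S := by
              simp only [hS, Set.mem_diff, mem_closedBall_zero_iff, mem_ball_zero_iff]
              exact ⟨not_lt.1 hx2, hx1⟩
            rw [show S.indicator (fun _ => c) x = c from Set.indicator_of_mem hxS _]
            nlinarith [hf0 x, hf1 x]
    _ = (∫ x, f x * dv ψ x) + c * (((1 + ε) ^ N - 1) * Vb N) := by
        rw [integral_add hfi (hInt0 c), hintv]
    _ ≤ _ := by linarith

lemma ball_tv {N : ℕ} {ψ : Euc N → Euc N} (h : ContDiff ℝ 1 ψ) (hc : HasCompactSupport ψ) (h1 : ∀ x, ‖ψ x‖ ≤ 1) :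
    ∫ x, (Metric.ball (0 : Euc N) 1).indicator 1 x * dv ψ x ≤ N * Vb N := by
  obtain ⟨c, hb⟩ := (dv_supp hc).exists_bound_of_continuous (dv_cont h)
  have hd : Tendsto (fun ε : ℝ => ε⁻¹ * ((1 + ε) ^ N - 1)) (𝓝[>] 0) (𝓝 N) := by
    have := (hasDerivAt_pow N (1:ℝ)).tendsto_slope_zero_right
    simpa using this
  have hid : Tendsto (fun ε : ℝ => ε) (𝓝[>] 0) (𝓝 0) := nhdsWithin_le_nhds
  have ht : Tendsto (fun ε : ℝ => (1 + c * ε) * (ε⁻¹ * ((1 + ε) ^ N - 1)) * Vb N) (𝓝[>] 0) (𝓝 ((1 + c * 0) * N * Vb N)) :=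
    ((((hid.const_mul c).const_add 1)).mul hd).mul_const _
  have := ge_of_tendsto ht (b := ∫ x, (Metric.ball (0 : Euc N) 1).indicator 1 x * dv ψ x) (by
    filter_upwards [eventually_mem_nhdsWithin] with ε hε
    have hε' : 0 < ε := hε
    refine (ball_tv_eps ε hε' h hc h1 c hb).trans (le_of_eq ?_)
    field_simp)
  simpa using this

/-- For `N ≥ 2` and `1 < q ≤ N/(N-1)`, the best constant `E_q`
equals `(1/(N^{N-1} ω_{N-1}))^{q-1}`. -/
theorem best_constant_Eq (N : ℕ) (hN : 2 ≤ N) (q : ℝ) (hq1 : 1 < q)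
    (hq2 : q ≤ (N : ℝ) / ((N : ℝ) - 1)) :
    EqSup N q = (1 / ((N : ℝ) ^ (N - 1) * omegaS N)) ^ (q - 1) := by
  set u : Euc N → ℝ := (Metric.ball (0 : Euc N) 1).indicator 1 with hu
  have hV := Vb_pos N
  have hN0 : (0:ℝ) < N := by positivity
  have hq0 : 0 < q := by linarith
  have hub : ∀ r ∈ TVSet N u, r ≤ N * Vb N := by
    rintro r ⟨ψ, h, hc, h1, rfl⟩
    exact ball_tv h hc h1
  have hBV : MemBV N u :=
    ⟨(integrable_indicator_iff measurableSet_ball).2 (integrableOn_const measure_ball_lt_top.ne), _, hub⟩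
  have htv0 := tv_nonneg hBV
  have htv1 : tv N u ≤ N * Vb N :=
    csSup_le ⟨_, fun _ => 0, contDiff_const, HasCompactSupport.zero, by simp, rfl⟩ hub
  have hune : u ≠ 0 := by
    intro h0
    have := congrFun h0 0
    simp [hu] at this
  have hn1 : nrm1 N u = Vb N := by
    have := eLpNorm_indicator_const (μ := (volume : Measure (Euc N))) (s := Metric.ball (0 : Euc N) 1) (c := (1:ℝ)) measurableSet_ball one_ne_zero ENNReal.one_ne_top
    rw [nrm1, show u = (Metric.ball (0 : Euc N) 1).indicator (fun _ => (1:ℝ)) from rfl, this]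
    simp
  have hnq : nrmq N q u ^ q = Vb N := by
    have := eLpNorm_indicator_const (μ := (volume : Measure (Euc N))) (s := Metric.ball (0 : Euc N) 1) (c := (1:ℝ)) (p := ENNReal.ofReal q) measurableSet_ball (by simpa using hq0) ENNReal.ofReal_ne_top
    rw [nrmq, show u = (Metric.ball (0 : Euc N) 1).indicator (fun _ => (1:ℝ)) from rfl, this,
      ENNReal.toReal_ofReal hq0.le, ENNReal.toReal_rpow, enorm_one, one_mul, ← ENNReal.rpow_mul, one_div, inv_mul_cancel₀ hq0.ne', ENNReal.rpow_one]
  have hmain := main_ineq N hN q hq1 hq2 hBV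
  have hb0 : 0 < (q - 1) * (N:ℝ) := mul_pos (by linarith) hN0
  have htvpos : 0 < tv N u := by
    rcases htv0.eq_or_lt with h0 | h0
    · rw [hnq, ← h0, Real.zero_rpow hb0.ne'] at hmain
      simp at hmain
      linarith
    · exact h0
  have hge : (1 / ((N : ℝ) ^ (N - 1) * omegaS N)) ^ (q - 1) ≤ ratioQ N q u := by
    rw [ratioQ, hnq, hn1, ← kappa_pow N hN q]
    have e1 : ((N * Vb N ^ (1 / N : ℝ)) ^ ((q - 1) * (N:ℝ)))⁻¹ = Vb N / (Vb N ^ (q - (q-1)*N) * (N * Vb N) ^ ((q-1)*(N:ℝ))) := by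
      rw [Real.mul_rpow hN0.le hV.le, Real.mul_rpow hN0.le (by positivity), ← Real.rpow_mul hV.le]
      rw [show 1 / (N:ℝ) * ((q - 1) * N) = q - 1 by field_simp]
      rw [eq_div_iff (by positivity), inv_mul_eq_div, div_eq_iff (by positivity)]
      rw [show Vb N ^ (q - (q-1)*N) * ((N:ℝ) ^ ((q-1)*(N:ℝ)) * Vb N ^ ((q-1)*(N:ℝ))) =
        (N:ℝ) ^ ((q-1)*(N:ℝ)) * (Vb N ^ (q - (q-1)*N) * Vb N ^ ((q-1)*(N:ℝ))) by ring, ← Real.rpow_add hV,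
        show Vb N * ((N:ℝ) ^ ((q-1)*(N:ℝ)) * Vb N ^ (q - 1)) = (N:ℝ) ^ ((q-1)*(N:ℝ)) * (Vb N ^ (1:ℝ) * Vb N ^ (q - 1)) by rw [Real.rpow_one]; ring,
        ← Real.rpow_add hV]
      congr 2; ring
    rw [e1]
    gcongr
  have hup : ∀ r ∈ { r | ∃ u : Euc N → ℝ, MemBV N u ∧ u ≠ 0 ∧ r = ratioQ N q u },
      r ≤ (1 / ((N : ℝ) ^ (N - 1) * omegaS N)) ^ (q - 1) := by
    rintro r ⟨w, hw, -, rfl⟩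
    exact ratio_le N hN q hq1 hq2 hw
  exact le_antisymm (csSup_le ⟨_, u, hBV, hune, rfl⟩ hup) (le_csSup_of_le ⟨_, hup⟩ ⟨u, hBV, hune, rfl⟩ hge)
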